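/- Let (X,d) be a compact metric space and G_1 = {g_1,…,g_m} a finite set of continuous self-maps of X generating a semigroup action that is strongly δ*-expansive for some δ* > 0, and let φ : X → ℝ be continuous with the bounded distortion property. Then the topological pressure can be computed at any definite scale below δ*: for every 0 < ε < δ*, P((G,G_1),φ,X) = limsup_{n→∞} (1/n) log( m^{-n} Σ_{w of length n} sup{ Σ_{x∈E} e^{S_wφ(x)} : E ⊆ X (w,n,ε)-separated } ). -/

import Mathlib

/-!
Let `E` be `(w, n, ε')`-separated with `ε' < ε`, and let `k` be the length that strong
expansiveness attaches to `γ = ε'`. Two distinct points of `E` are `ε'`-apart at some time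
`ℓ ≤ n`. Whatever word `v` of length `k` is appended, the orbits become `δ*`-apart between the
times `ℓ` and `ℓ + k ≤ n + k`, so `E` is `(vw, n + k, ε)`-separated (`lt_dynDist_append`).
Birkhoff sums along `w` and `vw` differ by at most `k ‖φ‖`, so averaging over all `v` and `w` gives
`Z_n(φ, ε') ≤ e^{k ‖φ‖} Z_{k+n}(φ, ε)` (`sepZ_le_shift`).

A cover of `X` by `N` balls of radius `ε / 2` shows that a `(w, n, ε)`-separated set has at most
`N ^ (n + 1)` points (`exists_card_le`). Hence `log Z_n(φ, ε) / n` is a bounded sequence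
(`exists_abs_log_le`), and the shift by `k` and the constant factor do not affect the upper limit.
So no scale gives a larger growth rate than `ε`. If `X` is empty or there are no generators, all
the sequences vanish.
-/

open Filter MeasureTheory Topology
open scoped Classical

/-- Composition of the generators along a word `w = [i_n, …, i_1]` (rightmost letter applied
first): `wcomp g w = g i_n ∘ … ∘ g i_1`.  The partial compositions `g_{w,ℓ}` are obtained as
`wcomp g s` for the suffixes `s <:+ w`. -/
def wcomp {m : ℕ} {X : Type*} (g : Fin m → X → X) : List (Fin m) → X → X
  | [] => id
  | i :: w => g i ∘ wcomp g w

/-- The dynamical distance `d_w(x,y) = max_{0 ≤ ℓ ≤ n} d(g_{w,ℓ} x, g_{w,ℓ} y)`, the partial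
compositions `g_{w,ℓ}` being the compositions along the suffixes of `w`. -/
noncomputable def dynDist {m : ℕ} {X : Type*} [MetricSpace X] (g : Fin m → X → X)
    (w : List (Fin m)) (x y : X) : ℝ :=
  ((w.tails).map fun s => dist (wcomp g s x) (wcomp g s y)).foldr max 0

/-- The Birkhoff sum `S_w φ = ∑_{ℓ=0}^{n-1} φ ∘ g_{w,ℓ}` along a word `w` of length `n`
(the partial compositions being the proper suffixes of `w`). -/
noncomputable def birk {m : ℕ} {X : Type*} (g : Fin m → X → X) (φ : X → ℝ)
    (w : List (Fin m)) (x : X) : ℝ :=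
  ((w.tails.drop 1).map fun s => φ (wcomp g s x)).sum

/-- Bounded distortion property of a potential `φ` for the semigroup action: Birkhoff sums
along any word are uniformly comparable on dynamical balls of some fixed radius. -/
def HasBoundedDistortion {m : ℕ} {X : Type*} [MetricSpace X] (g : Fin m → X → X)
    (φ : X → ℝ) : Prop :=
  ∃ ε : ℝ, 0 < ε ∧ ∃ C : ℝ, ∀ (w : List (Fin m)) (x y : X),
    dynDist g w x y < ε → |birk g φ w x - birk g φ w y| ≤ C

/-- Strong `δ`-expansiveness of the semigroup action: any two `γ`-separated points are
`δ`-separated along every word of some fixed length `k = k(γ)`. -/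
def StronglyExpansive {m : ℕ} {X : Type*} [MetricSpace X] (g : Fin m → X → X) (δ : ℝ) : Prop :=
  ∀ γ : ℝ, 0 < γ → ∃ k : ℕ, 1 ≤ k ∧ ∀ x y : X, γ ≤ dist x y →
    ∀ w : List (Fin m), w.length = k → δ < dynDist g w x y

/-- The partition function over `(w,n,ε)`-separated sets,
`Z_n(φ,ε) = m^{-n} ∑_{|w|=n} sup { ∑_{x ∈ E} e^{S_w φ(x)} : E (w,n,ε)-separated }`. -/
noncomputable def sepZ {m : ℕ} {X : Type*} [MetricSpace X] (g : Fin m → X → X) (φ : X → ℝ)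
    (n : ℕ) (ε : ℝ) : ℝ :=
  (1 / (m : ℝ) ^ n) * ∑ f : Fin n → Fin m,
    sSup {z : ℝ | ∃ F : Finset X,
      (∀ x ∈ F, ∀ y ∈ F, x ≠ y → ε < dynDist g (List.ofFn f) x y) ∧
      z = ∑ x ∈ F, Real.exp (birk g φ (List.ofFn f) x)}

/-- Topological pressure of the semigroup action with respect to `φ`, via separated sets:
`lim_{ε→0} limsup_n (1/n) log Z_n(φ,ε)`; by monotonicity in `ε` the limit as `ε → 0` is the
supremum over `ε > 0`. -/
noncomputable def sepPressure {m : ℕ} {X : Type*} [MetricSpace X] (g : Fin m → X → X)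
    (φ : X → ℝ) : ℝ :=
  ⨆ ε : {ε : ℝ // 0 < ε}, limsup (fun n : ℕ => Real.log (sepZ g φ n ε.1) / n) atTop

/-! ### Birkhoff sums and dynamical distances along concatenated words -/

/-- The family of weights over which the supremum in `sepZ` is taken, for a single word. -/
def sepSet {m : ℕ} {X : Type*} [MetricSpace X] (g : Fin m → X → X) (φ : X → ℝ)
    (w : List (Fin m)) (ε : ℝ) : Set ℝ :=
  {z : ℝ | ∃ F : Finset X,
      (∀ x ∈ F, ∀ y ∈ F, x ≠ y → ε < dynDist g w x y) ∧
      z = ∑ x ∈ F, Real.exp (birk g φ w x)}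

lemma lt_foldr_max {a : ℝ} (ha : 0 ≤ a) (l : List ℝ) :
    a < l.foldr max 0 ↔ ∃ z ∈ l, a < z := by
  induction l with
  | nil => simpa using ha
  | cons b l ih => simp [ih]

section
variable {m : ℕ} {X : Type*}

lemma wcomp_append (g : Fin m → X → X) (v w : List (Fin m)) (x : X) :
    wcomp g (v ++ w) x = wcomp g v (wcomp g w x) := by
  induction v with
  | nil => simp [wcomp]
  | cons i v ih => simp [wcomp, ih]

lemma birk_cons (g : Fin m → X → X) (φ : X → ℝ) (i : Fin m) (w : List (Fin m)) (x : X) :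
    birk g φ (i :: w) x = φ (wcomp g w x) + birk g φ w x := by
  cases w <;> simp [birk]

lemma birk_append (g : Fin m → X → X) (φ : X → ℝ) (v w : List (Fin m)) (x : X) :
    birk g φ (v ++ w) x = birk g φ v (wcomp g w x) + birk g φ w x := by
  induction v with
  | nil => simp [birk]
  | cons i v ih => rw [List.cons_append, birk_cons, birk_cons, ih, wcomp_append]; ring

lemma abs_birk_le (g : Fin m → X → X) (φ : X → ℝ) {M : ℝ} (hM : ∀ x, |φ x| ≤ M)
    (w : List (Fin m)) (x : X) : |birk g φ w x| ≤ w.length * M := by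
  induction w with
  | nil => simp [birk]
  | cons i w ih =>
    rw [birk_cons]
    refine (abs_add_le _ _).trans ?_
    have := hM (wcomp g w x)
    push_cast [List.length_cons]
    linarith

variable [MetricSpace X]

lemma lt_dynDist_iff (g : Fin m → X → X) {a : ℝ} (ha : 0 ≤ a) (w : List (Fin m)) (x y : X) :
    a < dynDist g w x y ↔ ∃ s, s <:+ w ∧ a < dist (wcomp g s x) (wcomp g s y) := by
  unfold dynDist
  rw [lt_foldr_max ha]
  simp

/-- Separation at a small scale along `w` becomes separation at scale `δ` along `v ++ w`, for
every continuation `v` of the length given by strong expansiveness. -/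
lemma lt_dynDist_append (g : Fin m → X → X) {δ γ : ℝ} (hδ : 0 ≤ δ) (hγ : 0 ≤ γ) {k : ℕ}
    (hk : ∀ x y : X, γ ≤ dist x y → ∀ w : List (Fin m), w.length = k → δ < dynDist g w x y)
    {v w : List (Fin m)} (hv : v.length = k) {x y : X} (h : γ < dynDist g w x y) :
    δ < dynDist g (v ++ w) x y := by
  obtain ⟨s, ⟨t, rfl⟩, hs⟩ := (lt_dynDist_iff g hγ _ _ _).1 h
  -- the `k` letters of `v ++ t` that are applied first
  let u := (v ++ t).drop t.length
  have hu : u.length = k := by simp [u, hv]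
  obtain ⟨r, hr, hd⟩ := (lt_dynDist_iff g hδ _ _ _).1 (hk _ _ hs.le u hu)
  rw [← wcomp_append, ← wcomp_append] at hd
  obtain ⟨p, hp⟩ := hr.trans (List.drop_suffix t.length (v ++ t))
  refine (lt_dynDist_iff g hδ _ _ _).2 ⟨r ++ s, ⟨p, ?_⟩, hd⟩
  rw [← List.append_assoc, hp, List.append_assoc]

/-! ### Partition functions at a fixed scale -/

/-- Separated sets have at most exponentially many points: the itinerary of a point with respect
to a finite cover by `ε / 2`-balls determines it. -/
lemma exists_card_le [CompactSpace X] (g : Fin m → X → X) {ε : ℝ} (hε : 0 < ε) :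
    ∃ N : ℕ, 1 ≤ N ∧ ∀ (w : List (Fin m)) (F : Finset X),
      (∀ x ∈ F, ∀ y ∈ F, x ≠ y → ε < dynDist g w x y) → F.card ≤ N ^ (w.length + 1) := by
  obtain ⟨t, -, htf, ht⟩ := (isCompact_univ (X := X)).finite_cover_balls (half_pos hε)
  have hc : ∀ x : X, ∃ c : t, dist x c < ε / 2 := by
    intro x
    have := ht (Set.mem_univ x)
    simp only [Set.mem_iUnion, Metric.mem_ball] at this
    obtain ⟨c, hc, h⟩ := this
    exact ⟨⟨c, hc⟩, h⟩
  choose c hc using hc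
  have := htf.fintype
  refine ⟨Fintype.card t + 1, by omega, fun w F hF => ?_⟩
  let code : X → (Fin (w.length + 1) → t) := fun x i => c (wcomp g (w.drop i) x)
  have hinj : Set.InjOn code F := by
    intro x hx y hy hxy
    by_contra hne
    obtain ⟨s, hs, hd⟩ := (lt_dynDist_iff g hε.le _ _ _).1 (hF x hx y hy hne)
    have hs' := List.suffix_iff_eq_drop.1 hs
    have h1 := congrFun hxy ⟨w.length - s.length, by omega⟩
    simp only [code] at h1
    rw [← hs'] at h1
    have h2 := hc (wcomp g s x)
    have h3 := hc (wcomp g s y)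
    rw [← h1] at h3
    have := dist_triangle_right (wcomp g s x) (wcomp g s y) (c (wcomp g s x))
    linarith
  have h := Finset.card_le_card_of_injOn (t := Finset.univ) code (by simp) hinj
  refine h.trans ?_
  simp only [Finset.card_univ, Fintype.card_fun, Fintype.card_fin]
  exact Nat.pow_le_pow_left (by omega) _

lemma sepSet_nonempty (g : Fin m → X → X) (φ : X → ℝ) (w : List (Fin m)) (ε : ℝ) :
    (sepSet g φ w ε).Nonempty := ⟨0, ∅, by simp, by simp⟩

lemma sepSet_le {g : Fin m → X → X} {φ : X → ℝ} {M : ℝ} (hM : ∀ x, |φ x| ≤ M) {ε : ℝ} {N : ℕ}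
    (hN : ∀ (w : List (Fin m)) (F : Finset X),
      (∀ x ∈ F, ∀ y ∈ F, x ≠ y → ε < dynDist g w x y) → F.card ≤ N ^ (w.length + 1))
    (w : List (Fin m)) {z : ℝ} (hz : z ∈ sepSet g φ w ε) :
    z ≤ (N : ℝ) ^ (w.length + 1) * Real.exp (w.length * M) := by
  obtain ⟨F, hF, rfl⟩ := hz
  calc ∑ x ∈ F, Real.exp (birk g φ w x) ≤ ∑ x ∈ F, Real.exp (w.length * M) :=
        Finset.sum_le_sum fun x _ =>
          Real.exp_le_exp.2 ((le_abs_self _).trans (abs_birk_le g φ hM w x))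
    _ = (F.card : ℝ) * Real.exp (w.length * M) := by simp
    _ ≤ _ := by
      gcongr
      exact_mod_cast hN w F hF

lemma sepSet_bddAbove [CompactSpace X] (g : Fin m → X → X) {φ : X → ℝ} {M : ℝ}
    (hM : ∀ x, |φ x| ≤ M) {ε : ℝ} (hε : 0 < ε) (w : List (Fin m)) :
    BddAbove (sepSet g φ w ε) := by
  obtain ⟨N, -, hN⟩ := exists_card_le g hε
  exact ⟨_, fun z hz => sepSet_le hM hN w hz⟩

lemma sepZ_eq (g : Fin m → X → X) (φ : X → ℝ) (n : ℕ) (ε : ℝ) :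
    sepZ g φ n ε = (1 / (m : ℝ) ^ n) * ∑ f : Fin n → Fin m, sSup (sepSet g φ (List.ofFn f) ε) :=
  rfl

/-- A single point is separated, so the supremum is at least the weight of a point. -/
lemma le_sSup_sepSet [CompactSpace X] [Nonempty X] (g : Fin m → X → X) {φ : X → ℝ} {M : ℝ}
    (hM : ∀ x, |φ x| ≤ M) {ε : ℝ} (hε : 0 < ε) (w : List (Fin m)) :
    Real.exp (-(w.length * M)) ≤ sSup (sepSet g φ w ε) := by
  obtain ⟨x⟩ := ‹Nonempty X›
  refine le_trans ?_ (le_csSup (sepSet_bddAbove g hM hε w) ⟨{x}, by simp, rfl⟩)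
  rw [Finset.sum_singleton]
  exact Real.exp_le_exp.2 (neg_le_of_abs_le (abs_birk_le g φ hM w x))

lemma sepZ_lower [CompactSpace X] [Nonempty X] (g : Fin m → X → X) {φ : X → ℝ} {M : ℝ}
    (hM : ∀ x, |φ x| ≤ M) {ε : ℝ} (hε : 0 < ε) (hm : m ≠ 0) (n : ℕ) :
    Real.exp (-(n * M)) ≤ sepZ g φ n ε := by
  have h : ∑ _f : Fin n → Fin m, Real.exp (-(n * M)) ≤
      ∑ f : Fin n → Fin m, sSup (sepSet g φ (List.ofFn f) ε) :=
    Finset.sum_le_sum fun f _ => by simpa using le_sSup_sepSet g hM hε (List.ofFn f)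
  simp only [Finset.sum_const, Finset.card_univ, Fintype.card_fun, Fintype.card_fin,
    nsmul_eq_mul, Nat.cast_pow] at h
  have hm' : (0 : ℝ) < (m : ℝ) ^ n := by positivity
  rw [sepZ_eq, one_div, inv_mul_eq_div, le_div_iff₀ hm', mul_comm]
  exact h

lemma sepZ_upper {g : Fin m → X → X} {φ : X → ℝ} {M : ℝ}
    (hM : ∀ x, |φ x| ≤ M) {ε : ℝ} {N : ℕ}
    (hN : ∀ (w : List (Fin m)) (F : Finset X),
      (∀ x ∈ F, ∀ y ∈ F, x ≠ y → ε < dynDist g w x y) → F.card ≤ N ^ (w.length + 1))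
    (hm : m ≠ 0) (n : ℕ) :
    sepZ g φ n ε ≤ (N : ℝ) ^ (n + 1) * Real.exp (n * M) := by
  have h : ∑ f : Fin n → Fin m, sSup (sepSet g φ (List.ofFn f) ε) ≤
      ∑ _f : Fin n → Fin m, (N : ℝ) ^ (n + 1) * Real.exp (n * M) :=
    Finset.sum_le_sum fun f _ => csSup_le (sepSet_nonempty _ _ _ _) fun z hz => by
      simpa using sepSet_le hM hN (List.ofFn f) hz
  rw [Finset.sum_const] at h
  simp only [Finset.card_univ, Fintype.card_fun, Fintype.card_fin,
    nsmul_eq_mul, Nat.cast_pow] at h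
  have hm' : (0 : ℝ) < (m : ℝ) ^ n := by positivity
  rw [sepZ_eq, one_div, inv_mul_eq_div, div_le_iff₀ hm', mul_comm]
  linarith

/-- The sequence `log Z_n / n` is bounded at every fixed scale. -/
lemma exists_abs_log_le [CompactSpace X] [Nonempty X] (g : Fin m → X → X) {φ : X → ℝ} {M : ℝ}
    (hM : ∀ x, |φ x| ≤ M) {ε : ℝ} (hε : 0 < ε) (hm : m ≠ 0) :
    ∃ B : ℝ, 0 ≤ B ∧ ∀ n : ℕ, |Real.log (sepZ g φ n ε) / n| ≤ B := by
  obtain ⟨N, hN1, hN⟩ := exists_card_le g hε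
  have hM0 : 0 ≤ M := (abs_nonneg _).trans (hM (Classical.arbitrary X))
  have hlogN : 0 ≤ Real.log N := Real.log_natCast_nonneg N
  refine ⟨2 * Real.log N + M, by positivity, fun n => ?_⟩
  rcases Nat.eq_zero_or_pos n with rfl | hn
  · simp only [Nat.cast_zero, div_zero, abs_zero]; positivity
  have hn' : (1 : ℝ) ≤ n := by exact_mod_cast hn
  have hlow := sepZ_lower g hM hε hm n
  have hpos := (Real.exp_pos _).trans_le hlow
  have h1 := (Real.le_log_iff_exp_le hpos).2 hlow
  have h2 := Real.log_le_log hpos (sepZ_upper hM hN hm n)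
  have hN0 : (N : ℝ) ≠ 0 := by positivity
  rw [Real.log_mul (by positivity) (by positivity), Real.log_exp, Real.log_pow] at h2
  push_cast at h2
  rw [abs_div, Nat.abs_cast, div_le_iff₀ (by positivity), abs_le]
  constructor <;> nlinarith

/-! ### Comparison of scales -/

/-- Passing from scale `ε < δ` to any other scale `γ`, with `k = k(γ)`, costs only `k` extra letters and a constant factor. -/
lemma sepZ_le_shift [CompactSpace X] (g : Fin m → X → X) {φ : X → ℝ} {M : ℝ}
    (hM : ∀ x, |φ x| ≤ M) {δ γ ε : ℝ} (hε : 0 < ε) (hεδ : ε < δ) (hγ : 0 ≤ γ) {k : ℕ}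
    (hk : ∀ x y : X, γ ≤ dist x y → ∀ w : List (Fin m), w.length = k → δ < dynDist g w x y)
    (hm : m ≠ 0) (n : ℕ) :
    sepZ g φ n γ ≤ Real.exp (k * M) * sepZ g φ (k + n) ε := by
  have hterm : ∀ (v : Fin k → Fin m) (w : Fin n → Fin m),
      sSup (sepSet g φ (List.ofFn w) γ) ≤
        Real.exp (k * M) * sSup (sepSet g φ (List.ofFn (Fin.append v w)) ε) := by
    intro v w
    rw [List.ofFn_fin_append]
    have hv : (List.ofFn v).length = k := by simp
    generalize List.ofFn v = v at hv ⊢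
    generalize List.ofFn w = w
    refine csSup_le (sepSet_nonempty _ _ _ _) ?_
    rintro z ⟨F, hF, rfl⟩
    have hmem : ∑ x ∈ F, Real.exp (birk g φ (v ++ w) x) ∈ sepSet g φ (v ++ w) ε :=
      ⟨F, fun x hx y hy hxy => hεδ.trans
        (lt_dynDist_append g (hε.trans hεδ).le hγ hk hv (hF x hx y hy hxy)), rfl⟩
    refine le_trans ?_ (mul_le_mul_of_nonneg_left
      (le_csSup (sepSet_bddAbove g hM hε _) hmem) (Real.exp_pos _).le)
    rw [Finset.mul_sum]
    refine Finset.sum_le_sum fun x _ => ?_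
    rw [← Real.exp_add, birk_append]
    refine Real.exp_le_exp.2 ?_
    have := neg_le_of_abs_le (abs_birk_le g φ hM v (wcomp g w x))
    rw [hv] at this
    linarith
  have hsum : (m : ℝ) ^ k * ∑ w : Fin n → Fin m, sSup (sepSet g φ (List.ofFn w) γ) ≤
      Real.exp (k * M) *
        ∑ f : Fin (k + n) → Fin m, sSup (sepSet g φ (List.ofFn f) ε) := by
    rw [← (Fin.appendEquiv k n).sum_comp, Fintype.sum_prod_type]
    have h : ∑ _v : Fin k → Fin m, ∑ w : Fin n → Fin m, sSup (sepSet g φ (List.ofFn w) γ) ≤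
        ∑ v : Fin k → Fin m, Real.exp (k * M) * ∑ w : Fin n → Fin m,
          sSup (sepSet g φ (List.ofFn (Fin.append v w)) ε) := by
      refine Finset.sum_le_sum fun v _ => ?_
      rw [Finset.mul_sum]
      exact Finset.sum_le_sum fun w _ => hterm v w
    rw [Finset.sum_const] at h
    simp only [Finset.card_univ, Fintype.card_fun, Fintype.card_fin,
      nsmul_eq_mul, Nat.cast_pow] at h
    rw [← Finset.mul_sum] at h
    exact h
  have hmk : (0 : ℝ) < (m : ℝ) ^ k := by positivity
  have hmn : (0 : ℝ) < (m : ℝ) ^ n := by positivity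
  rw [sepZ_eq, sepZ_eq, pow_add, one_div, inv_mul_eq_div, div_le_iff₀ hmn]
  calc ∑ w : Fin n → Fin m, sSup (sepSet g φ (List.ofFn w) γ)
      = ((m : ℝ) ^ k)⁻¹ *
          ((m : ℝ) ^ k * ∑ w : Fin n → Fin m, sSup (sepSet g φ (List.ofFn w) γ)) := by
        field_simp
    _ ≤ ((m : ℝ) ^ k)⁻¹ * (Real.exp (k * M) *
          ∑ f : Fin (k + n) → Fin m, sSup (sepSet g φ (List.ofFn f) ε)) := by gcongr
    _ = _ := by field_simp

lemma sepZ_anti [CompactSpace X] (g : Fin m → X → X) {φ : X → ℝ} {M : ℝ}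
    (hM : ∀ x, |φ x| ≤ M) {γ ε : ℝ} (hε : 0 < ε) (h : ε ≤ γ) (n : ℕ) :
    sepZ g φ n γ ≤ sepZ g φ n ε := by
  rw [sepZ_eq, sepZ_eq]
  gcongr with f
  · exact sepSet_bddAbove g hM hε _
  · exact sepSet_nonempty _ _ _ _
  · rintro z ⟨F, hF, rfl⟩
    exact ⟨F, fun x hx y hy hxy => h.trans_lt (hF x hx y hy hxy), rfl⟩

end

/-- A bounded index shift and an error `C / n` do not increase the upper limit of a bounded
sequence `L n / n`. -/
lemma limsup_le_of_shift {K L : ℕ → ℝ} {B B' C : ℝ} {k : ℕ} (hB : ∀ n : ℕ, |L n / n| ≤ B)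
    (hB' : ∀ n : ℕ, |K n / n| ≤ B') (h : ∀ n, K n ≤ C + L (k + n)) :
    limsup (fun n : ℕ => K n / n) atTop ≤ limsup (fun n : ℕ => L n / n) atTop := by
  refine le_of_forall_pos_le_add fun η hη => ?_
  have hbdd : IsBoundedUnder (· ≤ ·) atTop (fun n : ℕ => L n / n) :=
    isBoundedUnder_of ⟨B, fun n => (le_abs_self _).trans (hB n)⟩
  have h1 : ∀ᶠ n : ℕ in atTop, L n / n < limsup (fun n : ℕ => L n / n) atTop + η / 2 :=
    eventually_lt_of_limsup_lt (by linarith) hbdd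
  have hshift : Tendsto (fun n : ℕ => k + n) atTop atTop :=
    tendsto_atTop_mono (fun n => Nat.le_add_left n k) tendsto_id
  have h2 := hshift.eventually h1
  have h3 : ∀ᶠ n : ℕ in atTop, (C + B * k) / (n : ℝ) < η / 2 :=
    (tendsto_const_div_atTop_nhds_zero_nat (C + B * k)).eventually_lt_const (half_pos hη)
  refine limsup_le_of_le ?_ ?_
  · exact (isBoundedUnder_of ⟨-B', fun n => neg_le_of_abs_le (hB' n)⟩ :
      IsBoundedUnder (· ≥ ·) atTop (fun n : ℕ => K n / n)).isCoboundedUnder_le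
  filter_upwards [h2, h3, eventually_gt_atTop 0] with n h2 h3 hn
  have hn' : (0 : ℝ) < n := by exact_mod_cast hn
  set q := L (k + n) / ((k + n : ℕ) : ℝ) with hq
  have hL : L (k + n) = q * (k + n) := by
    rw [hq]; push_cast; field_simp
  have hqB : q ≤ B := (le_abs_self _).trans (hB _)
  have h4 : K n / n ≤ q + (C + B * k) / n := by
    rw [div_le_iff₀ hn', add_mul, div_mul_cancel₀ _ hn'.ne']
    have := h n
    have h5 : q * k ≤ B * k := by gcongr
    rw [hL] at this
    linarith
  linarith

/-- For a strongly `δ*`-expansive finitely generated semigroup action of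
continuous maps on a compact metric space and a continuous potential with the bounded
distortion property, the topological pressure can be computed at any definite scale
`0 < ε < δ*`. -/
theorem pressure_at_definite_scale
    {X : Type*} [MetricSpace X] [CompactSpace X]
    {m : ℕ} (g : Fin m → X → X) (hg : ∀ i, Continuous (g i))
    (δs : ℝ) (hδs : 0 < δs) (hexpansive : StronglyExpansive g δs)
    (φ : X → ℝ) (hφ : Continuous φ) (hbd : HasBoundedDistortion g φ)
    (ε : ℝ) (hε0 : 0 < ε) (hεδ : ε < δs) :
    sepPressure g φ = limsup (fun n : ℕ => Real.log (sepZ g φ n ε) / n) atTop := by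
  have : Nonempty {ε : ℝ // 0 < ε} := ⟨⟨ε, hε0⟩⟩
  unfold sepPressure
  rcases Nat.eq_zero_or_pos m with rfl | hm
  · have h : ∀ (η : ℝ) (n : ℕ), Real.log (sepZ g φ n η) / n = 0 := by
      intro η n
      rcases n with _ | n
      · simp
      · simp [sepZ]
    simp [h]
  rcases isEmpty_or_nonempty X with hX | hX
  · have h : ∀ (η : ℝ) (n : ℕ), Real.log (sepZ g φ n η) / n = 0 := by
      intro η n
      -- the only finite subset is empty, so every supremum is `sSup {0} = 0`
      have hF : ∀ F : Finset X, F = ∅ := fun F => Finset.eq_empty_of_isEmpty F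
      simp [sepZ, hF]
    simp [h]
  obtain ⟨M, hM⟩ : ∃ M : ℝ, ∀ x, |φ x| ≤ M := by
    obtain ⟨M, hM⟩ := isCompact_univ.exists_bound_of_continuousOn hφ.continuousOn
    exact ⟨M, fun x => hM x (Set.mem_univ x)⟩
  have hpos : ∀ (η : ℝ), 0 < η → ∀ n, 0 < sepZ g φ n η := fun η hη n =>
    (Real.exp_pos _).trans_le (sepZ_lower g hM hη hm.ne' n)
  have key : ∀ η : {ε : ℝ // 0 < ε},
      limsup (fun n : ℕ => Real.log (sepZ g φ n η.1) / n) atTop ≤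
        limsup (fun n : ℕ => Real.log (sepZ g φ n ε) / n) atTop := by
    rintro ⟨η, hη⟩
    obtain ⟨B, -, hB⟩ := exists_abs_log_le g hM hε0 hm.ne'
    obtain ⟨B', -, hB'⟩ := exists_abs_log_le g hM hη hm.ne'
    rcases le_total ε η with h | h
    · refine limsup_le_of_shift (C := 0) (k := 0) hB hB' fun n => ?_
      rw [zero_add, zero_add]
      exact Real.log_le_log (hpos η hη n) (sepZ_anti g hM hε0 h n)
    · obtain ⟨k, -, hk⟩ := hexpansive η hη
      refine limsup_le_of_shift (C := k * M) (k := k) hB hB' fun n => ?_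
      have := Real.log_le_log (hpos η hη n)
        (sepZ_le_shift g hM hε0 hεδ hη.le hk hm.ne' n)
      rwa [Real.log_mul (Real.exp_pos _).ne' (hpos ε hε0 _).ne', Real.log_exp] at this
  refine le_antisymm (ciSup_le key) ?_
  exact le_ciSup (f := fun η : {ε : ℝ // 0 < ε} =>
    limsup (fun n : ℕ => Real.log (sepZ g φ n η.1) / n) atTop)
    ⟨_, by rintro _ ⟨η, rfl⟩; exact key η⟩ ⟨ε, hε0⟩
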